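/- Let n ≥ 1 and let f : ℝⁿ → ℝ be a smooth convex function whose Hessian D²f(x) is positive definite at every x ∈ ℝⁿ. Then there is NO nonnegative function η : (0,∞) → ℝ such that S*_x(k) / W(x) = η(k) for all x ∈ ℝⁿ and all k > 0, where S*_x(k) = ∫_{{y : f(y) < f(x) + ⟨∇f(x), y − x⟩ + k}} √(1 + ‖∇f(y)‖²) dy and W(x) = √(1 + ‖∇f(x)‖²). -/

import Mathlib

open MeasureTheory Filter
open scoped RealInnerProductSpace Topology

/-- The Hessian matrix of `f : ℝⁿ → ℝ` at a point `x`, with entries the second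
partial derivatives of `f`. -/
noncomputable def hessianMatrix {n : ℕ} (f : EuclideanSpace ℝ (Fin n) → ℝ)
    (x : EuclideanSpace ℝ (Fin n)) : Matrix (Fin n) (Fin n) ℝ :=
  Matrix.of fun i j =>
    iteratedFDeriv ℝ 2 f x ![EuclideanSpace.single i 1, EuclideanSpace.single j 1]

/-- The Bregman divergence of `f`: the height of the graph of `f` over `y` above the tangent
hyperplane at `x`. -/
noncomputable def bregman {E : Type*} [NormedAddCommGroup E] [InnerProductSpace ℝ E]
    [CompleteSpace E] (f : E → ℝ) (x y : E) : ℝ :=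
  f y - f x - ⟪gradient f x, y - x⟫

/-- The area density of the graph of `f`. -/
noncomputable def areaDensity {E : Type*} [NormedAddCommGroup E] [InnerProductSpace ℝ E]
    [CompleteSpace E] (f : E → ℝ) (x : E) : ℝ :=
  Real.sqrt (1 + ‖gradient f x‖ ^ 2)

/-- The gradient of `f` is strictly monotone. -/
def StrictMonoGradient {E : Type*} [NormedAddCommGroup E] [InnerProductSpace ℝ E]
    [CompleteSpace E] (f : E → ℝ) : Prop :=
  ∀ x y, x ≠ y → 0 < ⟪gradient f y - gradient f x, y - x⟫

section Bregman

variable {E : Type*} [NormedAddCommGroup E] [InnerProductSpace ℝ E] [CompleteSpace E]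
  {f : E → ℝ}

@[simp]
lemma bregman_self (x : E) : bregman f x x = 0 := by simp [bregman]

lemma bregman_add_bregman_swap (x y : E) :
    bregman f x y + bregman f y x = ⟪gradient f y - gradient f x, y - x⟫ := by
  have h : ⟪gradient f y, x - y⟫ = -⟪gradient f y, y - x⟫ := by
    rw [← inner_neg_right, neg_sub]
  simp only [bregman, inner_sub_left, h]
  ring

lemma bregman_three_point (x y z : E) :
    bregman f x z = bregman f x y + ⟪gradient f y - gradient f x, z - y⟫ + bregman f y z := by
  have h : z - x = (y - x) + (z - y) := by abel
  simp only [bregman, inner_sub_left, h, inner_add_right]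
  ring

lemma areaDensity_pos (x : E) : 0 < areaDensity f x := by
  unfold areaDensity; positivity

lemma norm_gradient_le_areaDensity (x : E) : ‖gradient f x‖ ≤ areaDensity f x := by
  apply Real.le_sqrt_of_sq_le; linarith

lemma one_le_areaDensity (x : E) : 1 ≤ areaDensity f x := by
  apply Real.le_sqrt_of_sq_le; nlinarith [sq_nonneg ‖gradient f x‖]

lemma areaDensity_le (x : E) : areaDensity f x ≤ 1 + ‖gradient f x‖ := by
  apply Real.sqrt_le_iff.2 ⟨by positivity, by nlinarith [norm_nonneg (gradient f x)]⟩

lemma ContDiff.continuous_gradient (hf : ContDiff ℝ 1 f) : Continuous (gradient f) :=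
  (InnerProductSpace.toDual ℝ E).symm.continuous.comp (hf.continuous_fderiv one_ne_zero)

lemma ContDiff.continuous_bregman (hf : ContDiff ℝ 1 f) (x : E) :
    Continuous (bregman f x) := by
  have := hf.continuous
  unfold bregman
  fun_prop

lemma ContDiff.continuous_areaDensity (hf : ContDiff ℝ 1 f) : Continuous (areaDensity f) := by
  have := hf.continuous_gradient
  unfold areaDensity
  fun_prop

lemma ContDiff.hasFDerivAt_bregman (hf : ContDiff ℝ 1 f) (x y : E) :
    HasFDerivAt (bregman f x) (innerSL ℝ (gradient f y - gradient f x)) y := by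
  have h1 : HasFDerivAt f (innerSL ℝ (gradient f y)) y :=
    (hf.differentiable one_ne_zero y).hasGradientAt.hasFDerivAt
  have h2 : HasFDerivAt (fun z => ⟪gradient f x, z - x⟫) (innerSL ℝ (gradient f x)) y := by
    simpa only [Function.comp_def, ContinuousLinearMap.comp_id, innerSL_apply_apply, id] using
      ((innerSL ℝ (gradient f x)).hasFDerivAt (x := y - x)).comp y
      ((hasFDerivAt_id y).sub_const x)
  rw [map_sub]
  exact (h1.sub_const (f x)).sub h2

lemma ContDiff.hasDerivAt_bregman_line (hf : ContDiff ℝ 1 f) (x v : E) (s : ℝ) :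
    HasDerivAt (fun s : ℝ => bregman f x (x + s • v))
      ⟪gradient f (x + s • v) - gradient f x, v⟫ s := by
  have h : HasDerivAt (fun s : ℝ => x + s • v) v s := by
    simpa using ((hasDerivAt_id s).smul_const v).const_add x
  exact (hf.hasFDerivAt_bregman x (x + s • v)).comp_hasDerivAt s h

lemma inner_gradient_sub_nonneg (hmono : StrictMonoGradient f) (x y : E) :
    0 ≤ ⟪gradient f y - gradient f x, y - x⟫ := by
  rcases eq_or_ne x y with rfl | h
  · simp
  · exact (hmono x y h).le

lemma bregman_pos (hf : ContDiff ℝ 1 f) (hmono : StrictMonoGradient f)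
    {x y : E} (hxy : x ≠ y) : 0 < bregman f x y := by
  have hd := hf.hasDerivAt_bregman_line x (y - x)
  obtain ⟨c, hc, h⟩ := exists_hasDerivAt_eq_slope _ _ one_pos
    (fun s _ => (hd s).continuousAt.continuousWithinAt) (fun s _ => hd s)
  have hpos := hmono x (x + c • (y - x)) (by
    have := smul_ne_zero hc.1.ne' (sub_ne_zero.2 hxy.symm)
    intro h'
    exact this (by simpa using h'.symm))
  rw [add_sub_cancel_left, inner_smul_right, h] at hpos
  simpa using (pos_iff_pos_of_mul_pos hpos).1 hc.1

lemma bregman_nonneg (hf : ContDiff ℝ 1 f) (hmono : StrictMonoGradient f)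
    (x y : E) : 0 ≤ bregman f x y := by
  rcases eq_or_ne x y with rfl | h
  · simp
  · exact (bregman_pos hf hmono h).le

lemma bregman_le_inner (hf : ContDiff ℝ 1 f) (hmono : StrictMonoGradient f)
    (x y : E) :
    bregman f x y ≤ ⟪gradient f y - gradient f x, y - x⟫ := by
  linarith [bregman_add_bregman_swap (f := f) x y, bregman_nonneg hf hmono y x]

lemma bregman_le_bregman_dilation (hf : ContDiff ℝ 1 f) (hmono : StrictMonoGradient f)
    (x w : E) {s : ℝ} (hs : 1 ≤ s) :
    bregman f x (x + w) ≤ bregman f x (x + s • w) := by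
  have h : x + s • w - (x + w) = (s - 1) • (x + w - x) := by
    simp [sub_smul]
  have h3 := bregman_three_point (f := f) x (x + w) (x + s • w)
  rw [h, inner_smul_right] at h3
  have := mul_nonneg (sub_nonneg.2 hs) (inner_gradient_sub_nonneg hmono x (x + w))
  linarith [bregman_nonneg hf hmono (x + w) (x + s • w)]

lemma exists_norm_le_bregman (hf : ContDiff ℝ 1 f) (hmono : StrictMonoGradient f)
    [ProperSpace E] (x : E) :
    ∃ m, 0 < m ∧ ∀ y, m * ‖y - x‖ - m ≤ bregman f x y := by
  obtain ⟨m, hm, h⟩ := (isCompact_sphere x 1).exists_forall_le'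
    (hf.continuous_bregman x).continuousOn (a := 0) (fun y hy =>
      bregman_pos hf hmono (by rintro rfl; simp at hy))
  refine ⟨m, hm, fun y => ?_⟩
  rcases lt_or_ge ‖y - x‖ 1 with hy | hy
  · nlinarith [bregman_nonneg hf hmono x y]
  · have h0 : ‖y - x‖ ≠ 0 := by linarith
    set u : E := x + ‖y - x‖⁻¹ • (y - x) with hu
    have hmu : m ≤ bregman f x u := h u (by simp [hu, norm_smul, h0])
    have e : y - u = (‖y - x‖ - 1) • (u - x) := by
      rw [hu, add_sub_cancel_left, sub_smul, smul_smul, mul_inv_cancel₀ h0]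
      simp only [one_smul]
      abel
    have h3 := bregman_three_point (f := f) x u y
    rw [e, inner_smul_right] at h3
    nlinarith [bregman_nonneg hf hmono u y, bregman_le_inner hf hmono x u]

lemma exists_gradient_eq_midpoint (hf : ContDiff ℝ 1 f) (hmono : StrictMonoGradient f)
    [ProperSpace E] (a b : E) :
    ∃ z, (2 : ℝ) • gradient f z = gradient f a + gradient f b := by
  obtain ⟨m, hm, h⟩ := exists_norm_le_bregman hf hmono a
  obtain ⟨z, hz⟩ := ((hf.continuous_bregman a).add
    (hf.continuous_bregman b)).exists_forall_le (by
      have : Tendsto (fun y : E => m * ‖y‖ + (- m * ‖a‖ - m)) (cocompact E) atTop :=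
        tendsto_atTop_add_const_right _ _
          ((tendsto_norm_cocompact_atTop (E := E)).const_mul_atTop hm)
      refine tendsto_atTop_mono (fun y => ?_) this
      have := h y
      have := bregman_nonneg hf hmono b y
      have := norm_sub_norm_le y a
      simp only [Pi.add_apply]
      nlinarith)
  have hz' : IsLocalMin (fun y => bregman f a y + bregman f b y) z :=
    Eventually.of_forall hz
  have h0 := hz'.hasFDerivAt_eq_zero
    ((hf.hasFDerivAt_bregman a z).add (hf.hasFDerivAt_bregman b z))
  refine ⟨z, ext_inner_right ℝ fun v => ?_⟩
  have h1 := congrArg (fun L => L v) h0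
  simp only [_root_.add_apply, innerSL_apply_apply, inner_sub_left,
    _root_.zero_apply] at h1
  rw [inner_smul_left, inner_add_left, RCLike.conj_to_real]
  linarith

end Bregman

section Integrability

variable {E : Type*} [NormedAddCommGroup E] [InnerProductSpace ℝ E] [FiniteDimensional ℝ E]
  [MeasurableSpace E] [BorelSpace E] {f : E → ℝ}

lemma integrable_exp_neg_mul_norm {c : ℝ} (hc : 0 < c) :
    Integrable (fun w : E => Real.exp (-(c * ‖w‖))) := by
  set N : ℕ := Module.finrank ℝ E + 1 with hN
  have hNpos : (0 : ℝ) < N := by positivity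
  set b : ℝ := min 1 (c / N)
  have hb : 0 < b := lt_min one_pos (by positivity)
  have hint : Integrable (fun w : E => (1 + ‖w‖) ^ (-(N : ℝ))) :=
    integrable_one_add_norm (by rw [hN]; push_cast; linarith)
  refine (hint.const_mul (b ^ N)⁻¹).mono' (by fun_prop) (Eventually.of_forall fun w => ?_)
  have hw := norm_nonneg w
  have h1 : b * (1 + ‖w‖) ≤ Real.exp (c / N * ‖w‖) := by
    have h_one : b ≤ 1 := min_le_left 1 (c / N)
    have h_mul : b * ‖w‖ ≤ c / N * ‖w‖ := mul_le_mul_of_nonneg_right (min_le_right 1 (c / N)) hw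
    linarith [Real.add_one_le_exp (c / N * ‖w‖)]
  have h2 : b ^ N * (1 + ‖w‖) ^ N ≤ Real.exp (c * ‖w‖) := by
    have := pow_le_pow_left₀ (by positivity) h1 N
    rwa [← Real.exp_nat_mul, mul_pow, ← mul_assoc, mul_div_cancel₀ _ hNpos.ne'] at this
  rw [Real.norm_eq_abs, Real.abs_exp, Real.exp_neg, Real.rpow_neg (by positivity),
    Real.rpow_natCast, ← mul_inv]
  exact inv_anti₀ (by positivity) h2

lemma integrable_exp_neg_bregman (hf : ContDiff ℝ 1 f) (hmono : StrictMonoGradient f)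
    {t : ℝ} (ht : 0 < t) (x : E) :
    Integrable (fun w => Real.exp (-(t * bregman f x (x + w)))) := by
  obtain ⟨m, hm, h⟩ := exists_norm_le_bregman hf hmono x
  have hc := hf.continuous_bregman x
  refine ((integrable_exp_neg_mul_norm (E := E) (mul_pos ht hm)).const_mul
    (Real.exp (t * m))).mono' (by fun_prop) (Eventually.of_forall fun w => ?_)
  rw [Real.norm_eq_abs, Real.abs_exp, ← Real.exp_add]
  have := h (x + w)
  rw [add_sub_cancel_left] at this
  exact Real.exp_le_exp.2 (by nlinarith)

/-- The difference quotients at `s = 1` of the dilates `s ↦ ∫ exp (-t D(x, x + s w)) dw` bound the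
integral of the radial derivative, by Fatou's lemma. -/
lemma lintegral_radial_derivative_ne_top (hf : ContDiff ℝ 1 f) (hmono : StrictMonoGradient f)
    {t : ℝ} (ht : 0 < t) (x : E) :
    ∫⁻ w, ENNReal.ofReal (t * ⟪gradient f (x + w) - gradient f x, w⟫ *
      Real.exp (-(t * bregman f x (x + w)))) ≠ ⊤ := by
  set G : E → ℝ := fun w => Real.exp (-(t * bregman f x (x + w))) with hG
  have hGint : Integrable G := integrable_exp_neg_bregman hf hmono ht x
  have hGcont : Continuous G := by
    have := hf.continuous_bregman x
    fun_prop
  set ε : ℕ → ℝ := fun j => 1 / ((j : ℝ) + 1) with hε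
  have hεpos : ∀ j, 0 < ε j := fun j => Nat.one_div_pos_of_nat
  have hεle : ∀ j, ε j ≤ 1 := fun j => by
    rw [hε]; exact (div_le_one (by positivity)).2 (by linarith [(Nat.cast_nonneg j : (0 : ℝ) ≤ j)])
  set q : ℕ → E → ℝ := fun j w => (ε j)⁻¹ * (G w - G ((1 + ε j) • w)) with hq
  have hqnn : ∀ j w, 0 ≤ q j w := fun j w => by
    refine mul_nonneg (inv_nonneg.2 (hεpos j).le) (sub_nonneg.2 (Real.exp_le_exp.2 ?_))
    have := bregman_le_bregman_dilation hf hmono x w (s := 1 + ε j) (by linarith [hεpos j])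
    nlinarith
  have hlim : ∀ w, Tendsto (fun j => ENNReal.ofReal (q j w)) atTop
      (𝓝 (ENNReal.ofReal (t * ⟪gradient f (x + w) - gradient f x, w⟫ * G w))) := fun w => by
    refine ENNReal.tendsto_ofReal ?_
    have hd := (((hf.hasDerivAt_bregman_line x w 1).const_mul t).neg).exp
    rw [hasDerivAt_iff_tendsto_slope_zero] at hd
    have hε0 : Tendsto ε atTop (𝓝[≠] 0) :=
      tendsto_nhdsWithin_iff.2 ⟨tendsto_one_div_add_atTop_nhds_zero_nat,
        Eventually.of_forall fun j => (hεpos j).ne'⟩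
    have := (hd.comp hε0).neg
    convert this using 2
    · simp [hq, hG]; ring
    · simp [hG]; ring
  have hqint : ∀ j, ∫⁻ w, ENNReal.ofReal (q j w) ≤
      ENNReal.ofReal (Module.finrank ℝ E * ∫ w, G w) := fun j => by
    have h1 : Integrable (fun w => G ((1 + ε j) • w)) :=
      hGint.comp_smul (by linarith [hεpos j])
    have hqI : Integrable (q j) := (hGint.sub h1).const_mul _
    rw [← ofReal_integral_eq_lintegral_ofReal hqI (Eventually.of_forall (hqnn j))]
    refine ENNReal.ofReal_le_ofReal ?_
    rw [integral_const_mul, integral_sub hGint h1,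
      Measure.integral_comp_smul_of_nonneg volume G (1 + ε j) (hR := by linarith [hεpos j]),
      smul_eq_mul]
    have hI : 0 ≤ ∫ w, G w := integral_nonneg fun w => (Real.exp_pos _).le
    have hB : 1 - Module.finrank ℝ E * ε j ≤ ((1 + ε j) ^ Module.finrank ℝ E)⁻¹ := by
      have h2 := one_add_mul_le_pow (a := -ε j) (by linarith [hεle j]) (Module.finrank ℝ E)
      have h3 : 1 + -ε j ≤ (1 + ε j)⁻¹ := by
        rw [← one_div, le_div_iff₀ (by linarith [hεpos j])]
        nlinarith [hεpos j]
      have h4 := pow_le_pow_left₀ (by linarith [hεle j]) h3 (Module.finrank ℝ E)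
      rw [inv_pow] at h4
      linarith
    rw [inv_mul_le_iff₀ (hεpos j)]
    nlinarith
  have hfatou := lintegral_liminf_le (μ := (volume : Measure E)) (u := atTop)
    (f := fun j w => ENNReal.ofReal (q j w)) (fun j => by
      have : Measurable (q j) := Continuous.measurable (by fun_prop)
      exact this.ennreal_ofReal)
  simp only [fun w => (hlim w).liminf_eq] at hfatou
  exact ne_top_of_le_ne_top ENNReal.ofReal_ne_top
    (hfatou.trans (liminf_le_of_frequently_le' (Frequently.of_forall hqint)))

lemma integrable_areaDensity_mul_exp (hf : ContDiff ℝ 1 f) (hmono : StrictMonoGradient f)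
    {t : ℝ} (ht : 0 < t) (x : E) :
    Integrable (fun y => areaDensity f y * Real.exp (-(t * bregman f x y))) := by
  have hW := hf.continuous_areaDensity
  have hB := hf.continuous_bregman x
  have hg := hf.continuous_gradient
  suffices h : Integrable
      (fun w => areaDensity f (x + w) * Real.exp (-(t * bregman f x (x + w)))) by
    simpa using h.comp_add_left (-x)
  obtain ⟨C, hC⟩ := (isCompact_closedBall (0 : E) 1).exists_bound_of_continuousOn
    (f := fun v => bregman f x (x + v)) (by fun_prop)
  have hint1 := integrable_exp_neg_bregman hf hmono ht x
  have hnn : ∀ w, 0 ≤ ⟪gradient f (x + w) - gradient f x, w⟫ := fun w => by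
    simpa using inner_gradient_sub_nonneg hmono x (x + w)
  have hint2 : Integrable (fun w => t * ⟪gradient f (x + w) - gradient f x, w⟫ *
      Real.exp (-(t * bregman f x (x + w)))) := by
    refine ⟨Continuous.aestronglyMeasurable (by fun_prop), ?_⟩
    rw [hasFiniteIntegral_iff_ofReal (Eventually.of_forall fun w =>
      mul_nonneg (mul_nonneg ht.le (hnn w)) (Real.exp_pos _).le)]
    exact (lintegral_radial_derivative_ne_top hf hmono ht x).lt_top
  refine ((hint1.const_mul (1 + ‖gradient f x‖ + C)).add (hint2.const_mul t⁻¹)).mono'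
    (Continuous.aestronglyMeasurable (by fun_prop)) (Eventually.of_forall fun w => ?_)
  set u := gradient f (x + w) - gradient f x with hu
  have hgrad : ‖u‖ ≤ ⟪u, w⟫ + C := by
    set v : E := ‖u‖⁻¹ • u
    have hv : ‖v‖ ≤ 1 := by
      rw [norm_smul, norm_inv, norm_norm]
      exact inv_mul_le_one
    have h1 := bregman_three_point (f := f) x (x + w) (x + v)
    have h2 := hC v (by simpa using hv)
    have h3 : ⟪u, v⟫ = ‖u‖ := by
      rw [inner_smul_right, real_inner_self_eq_norm_sq]
      rcases eq_or_ne ‖u‖ 0 with h | h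
      · simp [h]
      · field_simp
    rw [add_sub_add_left_eq_sub, inner_sub_right, h3] at h1
    linarith [le_abs_self (bregman f x (x + v)), h2, Real.norm_eq_abs (bregman f x (x + v)),
      bregman_nonneg hf hmono x (x + w), bregman_nonneg hf hmono (x + w) (x + v)]
  have hle : areaDensity f (x + w) ≤ 1 + ‖gradient f x‖ + C + ⟪u, w⟫ := by
    have := areaDensity_le (f := f) (x + w)
    have := norm_le_norm_add_norm_sub' (gradient f (x + w)) (gradient f x)
    linarith
  rw [Real.norm_eq_abs, abs_of_nonneg (mul_nonneg (areaDensity_pos _).le (Real.exp_pos _).le)]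
  refine (mul_le_mul_of_nonneg_right hle (Real.exp_pos _).le).trans (le_of_eq ?_)
  simp only [Pi.add_apply, ← hu]
  field_simp

end Integrability

section ConstantNormalizedArea

variable {E : Type*} [NormedAddCommGroup E] [InnerProductSpace ℝ E] [FiniteDimensional ℝ E]
  [MeasurableSpace E] [BorelSpace E] {f : E → ℝ} {η : ℝ → ℝ}

lemma integrableOn_areaDensity_section (hf : ContDiff ℝ 1 f) (hmono : StrictMonoGradient f)
    (x : E) (k : ℝ) : IntegrableOn (areaDensity f) {y | bregman f x y < k} := by
  obtain ⟨m, hm, h⟩ := exists_norm_le_bregman hf hmono x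
  refine (hf.continuous_areaDensity.continuousOn.integrableOn_compact
    (isCompact_closedBall x ((k + m) / m))).mono_set fun y hy => ?_
  rw [mem_closedBall_iff_norm, le_div_iff₀ hm]
  have := h y
  have : bregman f x y < k := hy
  linarith

lemma setLIntegral_areaDensity_section (hf : ContDiff ℝ 1 f) (hmono : StrictMonoGradient f)
    (x : E) (k : ℝ) :
    ∫⁻ y in {y | bregman f x y < k}, ENNReal.ofReal (areaDensity f y) =
      ENNReal.ofReal (∫ y in {y | bregman f x y < k}, areaDensity f y) :=
  (ofReal_integral_eq_lintegral_ofReal (integrableOn_areaDensity_section hf hmono x k)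
    (Eventually.of_forall fun y => (areaDensity_pos y).le)).symm

/-- The distribution of the Bregman divergence from `x` under the surface measure of the graph. -/
noncomputable def bregmanDistribution (f : E → ℝ) (x : E) : Measure ℝ :=
  (volume.withDensity fun y => ENNReal.ofReal (areaDensity f y)).map (bregman f x)

lemma bregmanDistribution_Iio (hf : ContDiff ℝ 1 f) (hmono : StrictMonoGradient f) (x : E)
    (k : ℝ) : bregmanDistribution f x (Set.Iio k) =
      ENNReal.ofReal (∫ y in {y | bregman f x y < k}, areaDensity f y) := by
  have hm := (hf.continuous_bregman x).measurable
  rw [bregmanDistribution, Measure.map_apply hm measurableSet_Iio,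
    withDensity_apply _ (hm measurableSet_Iio)]
  exact setLIntegral_areaDensity_section hf hmono x k

lemma smul_bregmanDistribution (hf : ContDiff ℝ 1 f) (hmono : StrictMonoGradient f)
    (hη : ∀ x k, 0 < k →
      ∫ y in {y | bregman f x y < k}, areaDensity f y = areaDensity f x * η k) (x x' : E) :
    ENNReal.ofReal (areaDensity f x') • bregmanDistribution f x =
      ENNReal.ofReal (areaDensity f x) • bregmanDistribution f x' := by
  have hfin : ∀ x k, bregmanDistribution f x (Set.Iio k) ≠ ⊤ := fun x k => by
    rw [bregmanDistribution_Iio hf hmono]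
    exact ENNReal.ofReal_ne_top
  have hIio : ∀ k, ENNReal.ofReal (areaDensity f x') * bregmanDistribution f x (Set.Iio k) =
      ENNReal.ofReal (areaDensity f x) * bregmanDistribution f x' (Set.Iio k) := fun k => by
    rw [bregmanDistribution_Iio hf hmono, bregmanDistribution_Iio hf hmono]
    rcases le_or_gt k 0 with hk | hk
    · have : ∀ x, {y | bregman f x y < k} = ∅ := fun x =>
        Set.eq_empty_of_forall_notMem fun y hy =>
          absurd (lt_of_lt_of_le hy hk) (bregman_nonneg hf hmono x y).not_gt
      simp [this]
    · rw [hη x k hk, hη x' k hk, ← ENNReal.ofReal_mul (areaDensity_pos _).le,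
        ← ENNReal.ofReal_mul (areaDensity_pos _).le]
      congr 1
      ring
  have hIco : ∀ x, ∀ a b : ℝ, a < b → bregmanDistribution f x (Set.Ico a b) =
      bregmanDistribution f x (Set.Iio b) - bregmanDistribution f x (Set.Iio a) :=
    fun x a b hab => by
      rw [← Set.Iio_sdiff_Iio, measure_sdiff (Set.Iio_subset_Iio hab.le)
        measurableSet_Iio.nullMeasurableSet (hfin x a)]
  refine Measure.ext_of_Ico' _ _ (fun a b hab => ?_) fun a b hab => ?_
  · rw [Measure.smul_apply, smul_eq_mul]
    exact ENNReal.mul_ne_top ENNReal.ofReal_ne_top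
      (ne_top_of_le_ne_top (hfin x b) (measure_mono Set.Ico_subset_Iio_self))
  · rw [Measure.smul_apply, Measure.smul_apply, hIco x a b hab, hIco x' a b hab, smul_eq_mul,
      smul_eq_mul, ENNReal.mul_sub fun _ _ => ENNReal.ofReal_ne_top,
      ENNReal.mul_sub fun _ _ => ENNReal.ofReal_ne_top, hIio, hIio]

lemma integral_bregmanDistribution (hf : ContDiff ℝ 1 f) (x : E) {φ : ℝ → ℝ}
    (hφ : Continuous φ) :
    ∫ s, φ s ∂bregmanDistribution f x = ∫ y, areaDensity f y * φ (bregman f x y) := by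
  rw [bregmanDistribution, integral_map (hf.continuous_bregman x).measurable.aemeasurable
    hφ.aestronglyMeasurable, integral_withDensity_eq_integral_toReal_smul
      hf.continuous_areaDensity.measurable.ennreal_ofReal
      (Eventually.of_forall fun _ => ENNReal.ofReal_lt_top)]
  simp only [ENNReal.toReal_ofReal (areaDensity_pos _).le, smul_eq_mul]

lemma areaDensity_mul_integral_eq (hf : ContDiff ℝ 1 f) (hmono : StrictMonoGradient f)
    (hη : ∀ x k, 0 < k →
      ∫ y in {y | bregman f x y < k}, areaDensity f y = areaDensity f x * η k) (x x' : E)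
    {φ : ℝ → ℝ} (hφ : Continuous φ) :
    areaDensity f x' * ∫ y, areaDensity f y * φ (bregman f x y) =
      areaDensity f x * ∫ y, areaDensity f y * φ (bregman f x' y) := by
  have h := congrArg (fun μ => ∫ s, φ s ∂μ) (smul_bregmanDistribution hf hmono hη x x')
  simpa only [integral_smul_measure, ENNReal.toReal_ofReal (areaDensity_pos _).le, smul_eq_mul,
    integral_bregmanDistribution hf _ hφ] using h

lemma areaDensity_midpoint_le (hf : ContDiff ℝ 1 f) (hmono : StrictMonoGradient f)
    (hη : ∀ x k, 0 < k →
      ∫ y in {y | bregman f x y < k}, areaDensity f y = areaDensity f x * η k) {a b z : E}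
    (hz : (2 : ℝ) • gradient f z = gradient f a + gradient f b) :
    areaDensity f z ≤ 2 * areaDensity f a + areaDensity f b / 8 := by
  set c : ℝ := bregman f z 0 - (bregman f a 0 + bregman f b 0) / 2 with hc
  have hsplit : ∀ y, bregman f z y = (bregman f a y + bregman f b y) / 2 + c := fun y => by
    have h := congrArg (fun v => ⟪v, y⟫) hz
    simp only [inner_smul_left, inner_add_left, RCLike.conj_to_real] at h
    simp only [hc, bregman, inner_sub_right, inner_zero_right]
    linarith
  set R : ℝ := 2 * areaDensity f a + areaDensity f b / 8
  have hbound : ∀ t : ℝ, 0 < t → areaDensity f z ≤ Real.exp (-(t * c)) * R := fun t ht => by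
    have hI := integrable_areaDensity_mul_exp hf hmono ht
    have hφ : Continuous fun s : ℝ => Real.exp (-(t * s)) := by fun_prop
    set I : E → ℝ := fun x => ∫ y, areaDensity f y * Real.exp (-(t * bregman f x y)) with hIdef
    have hscale : ∀ x, areaDensity f z * I x = areaDensity f x * I z := fun x =>
      areaDensity_mul_integral_eq hf hmono hη x z hφ
    have hpos : 0 < I z := by
      have hp : ∀ y, 0 < areaDensity f y * Real.exp (-(t * bregman f z y)) := fun y =>
        mul_pos (areaDensity_pos y) (Real.exp_pos _)
      rw [hIdef, integral_pos_iff_support_of_nonneg (fun y => (hp y).le) (hI z),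
        Function.support_eq_univ fun y => (hp y).ne']
      exact Measure.measure_univ_pos.2 (NeZero.ne _)
    have hle : I z ≤ Real.exp (-(t * c)) * (2 * I a + I b / 8) := by
      have e : Real.exp (-(t * c)) * (2 * I a + I b / 8) =
          ∫ y, Real.exp (-(t * c)) * (2 * (areaDensity f y * Real.exp (-(t * bregman f a y))) +
            areaDensity f y * Real.exp (-(t * bregman f b y)) / 8) := by
        rw [integral_const_mul, integral_add ((hI a).const_mul 2) ((hI b).div_const 8),
          integral_const_mul, integral_div]
      rw [e]
      refine integral_mono (hI z) ((((hI a).const_mul 2).add ((hI b).div_const 8)).const_mul _)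
        fun y => ?_
      have h1 : Real.exp (-(t * bregman f z y)) = Real.exp (-(t * c)) *
          (Real.exp (-(t * bregman f a y) / 2) * Real.exp (-(t * bregman f b y) / 2)) := by
        rw [← Real.exp_add, ← Real.exp_add, hsplit]
        ring_nf
      have hsq : ∀ s : ℝ, Real.exp s = Real.exp (s / 2) ^ 2 := fun s => by
        rw [← Real.exp_nat_mul]; push_cast; ring_nf
      simp only [h1]
      rw [hsq (-(t * bregman f a y)), hsq (-(t * bregman f b y)), mul_left_comm]
      refine mul_le_mul_of_nonneg_left ?_ (Real.exp_pos _).le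
      nlinarith [mul_nonneg (areaDensity_pos (f := f) y).le
        (sq_nonneg (4 * Real.exp (-(t * bregman f a y) / 2) -
          Real.exp (-(t * bregman f b y) / 2)))]
    refine le_of_mul_le_mul_right ?_ hpos
    calc areaDensity f z * I z
        ≤ areaDensity f z * (Real.exp (-(t * c)) * (2 * I a + I b / 8)) :=
          mul_le_mul_of_nonneg_left hle (areaDensity_pos z).le
      _ = Real.exp (-(t * c)) * (2 * (areaDensity f z * I a) + areaDensity f z * I b / 8) := by
          ring
      _ = Real.exp (-(t * c)) * R * I z := by
          rw [hscale a, hscale b]; ring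
  have hlim : Tendsto (fun t : ℝ => Real.exp (-(t * c)) * R) (𝓝[>] 0) (𝓝 R) := by
    have : Continuous fun t : ℝ => Real.exp (-(t * c)) * R := by fun_prop
    simpa using (this.tendsto 0).mono_left nhdsWithin_le_nhds
  exact ge_of_tendsto hlim (eventually_nhdsWithin_of_forall hbound)

lemma exists_norm_gradient_le (hf : ContDiff ℝ 1 f) (hmono : StrictMonoGradient f)
    (hη : ∀ x k, 0 < k →
      ∫ y in {y | bregman f x y < k}, areaDensity f y = areaDensity f x * η k) :
    ∃ M, ∀ x, ‖gradient f x‖ ≤ M := by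
  refine ⟨8 / 3 * (2 * areaDensity f 0 + 1 + ‖gradient f 0‖), fun x => ?_⟩
  obtain ⟨z, hz⟩ := exists_gradient_eq_midpoint hf hmono 0 x
  have h1 := areaDensity_midpoint_le hf hmono hη hz
  have h2 := norm_gradient_le_areaDensity (f := f) z
  have h3 := areaDensity_le (f := f) x
  have h4 : ‖gradient f x‖ ≤ 2 * ‖gradient f z‖ + ‖gradient f 0‖ := by
    have : gradient f x = (2 : ℝ) • gradient f z - gradient f 0 := by rw [hz]; abel
    calc ‖gradient f x‖ ≤ ‖(2 : ℝ) • gradient f z‖ + ‖gradient f 0‖ := by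
          rw [this]; exact norm_sub_le _ _
      _ = _ := by rw [norm_smul, Real.norm_ofNat]
  linarith [norm_nonneg (gradient f 0)]

/-- If the gradient is bounded, sections at points where the slope in a fixed direction is almost
maximal contain arbitrarily long cylinders of fixed radius. -/
lemma exists_lt_volume_section [Nontrivial E] (hf : ContDiff ℝ 1 f)
    (hmono : StrictMonoGradient f) {M : ℝ} (hM : ∀ x, ‖gradient f x‖ ≤ M) {V : ENNReal}
    (hV : V ≠ ⊤) : ∃ x, V < volume {y | bregman f x y < 1} := by
  obtain ⟨e, he⟩ := exists_norm_eq E zero_le_one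
  have hM0 : 0 ≤ M := (norm_nonneg _).trans (hM 0)
  set r : ℝ := 1 / (4 * (M + 1)) with hr
  have hrpos : 0 < r := by positivity
  have hrM : 2 * M * r ≤ 1 / 2 := by
    rw [hr, mul_one_div, div_le_div_iff₀ (by positivity) (by norm_num)]
    linarith
  obtain ⟨N, hN⟩ := ENNReal.exists_nat_mul_gt (Metric.measure_ball_pos volume (0 : E) hrpos).ne' hV
  have hbdd : BddAbove (Set.range fun x => ⟪gradient f x, e⟫) := by
    refine ⟨M, ?_⟩
    rintro _ ⟨x, rfl⟩
    have := real_inner_le_norm (gradient f x) e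
    rw [he, mul_one] at this
    exact this.trans (hM x)
  set δ : ℝ := 1 / (2 * (2 * r * N + 1)) with hδ
  have hδpos : 0 < δ := by positivity
  obtain ⟨_, ⟨x, rfl⟩, hx⟩ := exists_lt_of_lt_csSup (Set.range_nonempty _)
    (sub_lt_self (sSup (Set.range fun x => ⟪gradient f x, e⟫)) hδpos)
  have hslope : ∀ y, ⟪gradient f y - gradient f x, e⟫ ≤ δ := fun y => by
    have := le_csSup hbdd ⟨y, rfl⟩
    simp only at this hx
    rw [inner_sub_left]
    linarith
  refine ⟨x, hN.trans_le ?_⟩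
  have hsub : (⋃ i ∈ Finset.range N, Metric.ball (x + (2 * r * i) • e) r) ⊆
      {y | bregman f x y < 1} := by
    refine Set.iUnion₂_subset fun i hi z hz => ?_
    set y : E := x + (2 * r * i) • e with hy
    have hiN : (i : ℝ) ≤ N := by exact_mod_cast (Finset.mem_range.1 hi).le
    have hi0 : 0 ≤ 2 * r * i := by positivity
    have h1 : bregman f x y ≤ 1 / 2 := by
      have h := bregman_le_inner hf hmono x y
      rw [hy, add_sub_cancel_left, inner_smul_right, ← hy] at h
      calc bregman f x y ≤ 2 * r * i * δ :=
            h.trans (mul_le_mul_of_nonneg_left (hslope y) hi0)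
        _ ≤ (2 * r * N + 1) * δ := by
            refine mul_le_mul_of_nonneg_right ?_ hδpos.le
            nlinarith
        _ = 1 / 2 := by rw [hδ]; field_simp
    have hzr : ‖z - y‖ < r := mem_ball_iff_norm.1 hz
    have h2 := bregman_three_point (f := f) x y z
    have h3 := bregman_le_inner hf hmono y z
    have h4 : ⟪gradient f y - gradient f x, z - y⟫ + ⟪gradient f z - gradient f y, z - y⟫ =
        ⟪gradient f z - gradient f x, z - y⟫ := by
      rw [← inner_add_left]; congr 1; abel
    have h5 : ⟪gradient f z - gradient f x, z - y⟫ ≤ 2 * M * ‖z - y‖ := by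
      refine (real_inner_le_norm _ _).trans (mul_le_mul_of_nonneg_right ?_ (norm_nonneg _))
      linarith [norm_sub_le (gradient f z) (gradient f x), hM x, hM z]
    have h6 : 2 * M * ‖z - y‖ < 1 / 2 := by
      rcases hM0.eq_or_lt with h | h
      · rw [← h]; norm_num
      · exact (mul_lt_mul_of_pos_left hzr (by positivity)).trans_le hrM
    change bregman f x z < 1
    linarith
  refine le_trans (le_of_eq ?_) (measure_mono hsub)
  rw [measure_biUnion_finset]
  · simp [Measure.addHaar_ball_center]
  · intro i _ j _ hij
    refine Metric.ball_disjoint_ball ?_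
    rw [dist_eq_norm, add_sub_add_left_eq_sub, ← sub_smul, norm_smul, he, mul_one, ← mul_sub,
      Real.norm_eq_abs, abs_mul, abs_of_pos (by positivity : 0 < 2 * r)]
    have : (1 : ℝ) ≤ |(i : ℝ) - j| := by
      exact_mod_cast Int.one_le_abs (sub_ne_zero.2 (Nat.cast_injective.ne hij : (i : ℤ) ≠ j))
    nlinarith
  · exact fun i _ => measurableSet_ball

theorem not_forall_integral_areaDensity_eq [Nontrivial E] (hf : ContDiff ℝ 1 f)
    (hmono : StrictMonoGradient f) :
    ¬ ∀ x k, 0 < k →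
      ∫ y in {y | bregman f x y < k}, areaDensity f y = areaDensity f x * η k := by
  intro hη
  obtain ⟨M, hM⟩ := exists_norm_gradient_le hf hmono hη
  obtain ⟨x, hx⟩ := exists_lt_volume_section hf hmono hM
    (ENNReal.ofReal_ne_top (r := (1 + M) * |η 1|))
  refine hx.not_ge ?_
  calc volume {y | bregman f x y < 1}
      = ∫⁻ y in {y | bregman f x y < 1}, 1 := by simp
    _ ≤ ∫⁻ y in {y | bregman f x y < 1}, ENNReal.ofReal (areaDensity f y) :=
        lintegral_mono fun y => by
          simpa using ENNReal.ofReal_le_ofReal (one_le_areaDensity (f := f) y)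
    _ = ENNReal.ofReal (areaDensity f x * η 1) := by
        rw [setLIntegral_areaDensity_section hf hmono, hη x 1 one_pos]
    _ ≤ ENNReal.ofReal ((1 + M) * |η 1|) :=
        ENNReal.ofReal_le_ofReal
          ((mul_le_mul_of_nonneg_left (le_abs_self _) (areaDensity_pos x).le).trans
            (mul_le_mul_of_nonneg_right ((areaDensity_le x).trans (by linarith [hM x]))
              (abs_nonneg _)))

end ConstantNormalizedArea

lemma strictMonoGradient_of_posDef_hessian {n : ℕ} {f : EuclideanSpace ℝ (Fin n) → ℝ}
    (hf : ContDiff ℝ 2 f) (hhess : ∀ x, (hessianMatrix f x).PosDef) : StrictMonoGradient f := by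
  intro x y hxy
  set v := y - x with hv
  have hv0 : v ≠ 0 := sub_ne_zero.2 hxy.symm
  have hquad : ∀ z, 0 < fderiv ℝ (fderiv ℝ f) z v v := fun z => by
    have hpos := (hhess z).dotProduct_mulVec_pos (x := v.ofLp)
      (fun h => hv0 (by ext i; exact congrFun h i))
    have hsum : v = ∑ i, v i • EuclideanSpace.single i (1 : ℝ) := by
      simpa using ((EuclideanSpace.basisFun (Fin n) ℝ).sum_repr v).symm
    refine hpos.trans_eq (Eq.symm ?_)
    calc fderiv ℝ (fderiv ℝ f) z v v
        = fderiv ℝ (fderiv ℝ f) z (∑ i, v i • EuclideanSpace.single i (1 : ℝ))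
            (∑ j, v j • EuclideanSpace.single j (1 : ℝ)) := by rw [← hsum]
      _ = _ := by
        simp only [map_sum, map_smul, _root_.sum_apply, _root_.smul_apply, smul_eq_mul,
          dotProduct, Matrix.mulVec, hessianMatrix, Matrix.of_apply, iteratedFDeriv_two_apply,
          Matrix.cons_val_zero, Matrix.cons_val_one, Pi.star_apply, star_trivial, Finset.mul_sum]
        rw [Finset.sum_comm]
        exact Finset.sum_congr rfl fun _ _ => Finset.sum_congr rfl fun _ _ => by ring
  have hd : ∀ s : ℝ, HasDerivAt (fun s : ℝ => fderiv ℝ f (x + s • v) v)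
      (fderiv ℝ (fderiv ℝ f) (x + s • v) v v) s := fun s => by
    have h1 : HasDerivAt (fun s : ℝ => x + s • v) v s := by
      simpa using ((hasDerivAt_id s).smul_const v).const_add x
    have h2 : DifferentiableAt ℝ (fderiv ℝ f) (x + s • v) :=
      (hf.fderiv_right (m := 1) (by norm_num)).differentiable one_ne_zero _
    exact (ContinuousLinearMap.apply ℝ ℝ v).hasFDerivAt.comp_hasDerivAt s
      (h2.hasFDerivAt.comp_hasDerivAt s h1)
  have hstrict := strictMono_of_hasDerivAt_pos hd fun s => hquad _
  have h := hstrict (zero_lt_one' ℝ)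
  simp only [zero_smul, add_zero, one_smul, hv, add_sub_cancel] at h
  rw [inner_sub_left, inner_gradient_left, inner_gradient_left]
  linarith

theorem no_constant_normalized_surface_area (n : ℕ) (hn : 1 ≤ n)
    (f : EuclideanSpace ℝ (Fin n) → ℝ)
    (hf : ContDiff ℝ (⊤ : ℕ∞) f) (hconv : ConvexOn ℝ Set.univ f)
    (hhess : ∀ x, (hessianMatrix f x).PosDef) :
    ¬ ∃ η : ℝ → ℝ, (∀ k, 0 < k → 0 ≤ η k) ∧
      ∀ (x : EuclideanSpace ℝ (Fin n)) (k : ℝ), 0 < k →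
        (∫ y in {y | f y < f x + ⟪gradient f x, y - x⟫ + k},
            Real.sqrt (1 + ‖gradient f y‖ ^ 2)) /
          Real.sqrt (1 + ‖gradient f x‖ ^ 2) = η k := by
  rintro ⟨η, -, hη⟩
  have : Nonempty (Fin n) := ⟨⟨0, hn⟩⟩
  refine not_forall_integral_areaDensity_eq (contDiff_infty.1 hf 1)
    (strictMonoGradient_of_posDef_hessian (contDiff_infty.1 hf 2) hhess)
    (η := η) fun x k hk => ?_
  have hset : {y | bregman f x y < k} = {y | f y < f x + ⟪gradient f x, y - x⟫ + k} := by
    ext y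
    simp only [bregman, Set.mem_ofPred_eq]
    constructor <;> intro h <;> linarith
  rw [hset, ← hη x k hk]
  exact (mul_div_cancel₀ _ (areaDensity_pos x).ne').symm
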